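/- Let 0 ≤ r1, r2 ≤ n, 0 ≤ s ≤ min(r1, n − r1, r2, n − r2), and let k be an integer with max(0, r2 − r1) ≤ k ≤ min(r2, n − r1). Then λ_s^{r1,r2}(k; n) = ([r1]_s / [r2]_s) · Σ_{j=0}^s (−1)^j binom(s, j) · binom(r1 − s, r1 − r2 + k − j) · binom(n − r1 − s, k − j) / (binom(r1, r1 − r2 + k) · binom(n − r1, k)). -/

import Mathlib

/-- Falling factorial `z(z-1)⋯(z-k+1)` for complex `z`. -/
noncomputable def cfall (z : ℂ) (k : ℕ) : ℂ := ∏ i ∈ Finset.range k, (z - i)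

/-- Generalized binomial coefficient `binom(t, j)` for complex `t`. -/
noncomputable def cbinom (t : ℂ) (j : ℕ) : ℂ := cfall t j / (Nat.factorial j)

/-- The Hahn kernel `λ_s^{r1,r2}(t; n)`. -/
noncomputable def hahn (n r1 r2 s : ℕ) (t : ℂ) : ℂ :=
  ∑ j ∈ Finset.range (s + 1),
    (-1 : ℂ) ^ j * cbinom t j * cfall (s : ℂ) j * cfall ((n : ℂ) - s + 1) j /
      (cfall ((n : ℂ) - r1) j * cfall (r2 : ℂ) j)

/-- Binomial coefficient `binom(a, b)` with integer lower index, equal to `0` when `b < 0`. -/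
def ichoose (a : ℕ) (b : ℤ) : ℕ := if 0 ≤ b then a.choose b.toNat else 0


theorem cfall_zero (z : ℂ) : cfall z 0 = 1 := by simp [cfall]

theorem cfall_succ (z : ℂ) (k : ℕ) : cfall z (k + 1) = cfall z k * (z - k) := by
  simp [cfall, Finset.prod_range_succ]

theorem cfall_succ' (z : ℂ) (k : ℕ) : cfall z (k + 1) = z * cfall (z - 1) k := by
  unfold cfall
  rw [Finset.prod_range_succ', mul_comm]
  congr 1
  · simp
  · apply Finset.prod_congr rfl
    intro i _
    push_cast
    ring

theorem cfall_add (z : ℂ) (j m : ℕ) : cfall z (j + m) = cfall z j * cfall (z - j) m := by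
  unfold cfall
  rw [Finset.prod_range_add]
  congr 1
  apply Finset.prod_congr rfl
  intro i _
  push_cast
  ring

theorem cfall_nat (a k : ℕ) : cfall (a : ℂ) k = (a.descFactorial k : ℂ) := by
  induction k with
  | zero => simp [cfall_zero]
  | succ k ih =>
    rw [cfall_succ, ih, Nat.descFactorial_succ]
    rcases le_or_gt k a with h | h
    · push_cast [h]; ring
    · rw [Nat.descFactorial_of_lt h]; simp

theorem cfall_shift (z : ℂ) (k : ℕ) :
    (z + 1 - k) * cfall (z + 1) k = (z + 1) * cfall z k := by
  have h1 := cfall_succ (z + 1) k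
  have h2 := cfall_succ' (z + 1) k
  rw [add_sub_cancel_right] at h2
  rw [← h2, h1]; ring

/-- Terms of the left-hand sum. -/
noncomputable def lterm (S : ℕ) (K A B b : ℂ) (m : ℕ) : ℂ :=
  (-1) ^ m * (S.choose m : ℂ) * cfall K m * cfall (A + B + b + K - S + 1) m *
    cfall (A + K - m) (S - m) * cfall (B + K - m) (S - m)

/-- Terms of the right-hand sum. -/
noncomputable def rterm (S : ℕ) (K A B b : ℂ) (m : ℕ) : ℂ :=
  (-1) ^ m * (S.choose m : ℂ) * cfall K m * cfall b m * cfall A (S - m) * cfall B (S - m)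

theorem wz (S : ℕ) (K A B : ℂ) (M : ℕ) (hM : M ≤ S) :
    ∑ m ∈ Finset.range (M + 1), (lterm S (K + 1) A B 0 m - lterm S K A B 0 m) =
      (-1) ^ M * ((S - M : ℕ) : ℂ) * (S.choose M : ℂ) * (A + B + K - S + 1 + K + 1 - M) *
        cfall K M * cfall (A + B + K - S + 1) M *
        cfall (A + K - M) (S - M - 1) * cfall (B + K - M) (S - M - 1) := by
  induction M with
  | zero =>
    rw [Finset.sum_range_one]
    unfold lterm
    rcases S with _ | S
    · simp [cfall_zero]
    · have e1 : A + (K + 1) - ((0 : ℕ) : ℂ) - 1 = A + K := by push_cast; ring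
      have e2 : B + (K + 1) - ((0 : ℕ) : ℂ) - 1 = B + K := by push_cast; ring
      simp only [Nat.sub_zero, Nat.add_sub_cancel, cfall_zero]
      rw [cfall_succ' (A + (K + 1) - _), cfall_succ' (B + (K + 1) - _), e1, e2,
        cfall_succ, cfall_succ]
      simp only [Nat.cast_zero, sub_zero]
      push_cast
      simp
      ring
  | succ p ih =>
    rw [Finset.sum_range_succ, ih (by omega)]
    obtain ⟨d, rfl⟩ := Nat.exists_eq_add_of_le hM
    have hc : ((p + 1 + d).choose (p + 1) : ℂ) * (p + 1) = ((p + 1 + d).choose p : ℂ) * (d + 1) := by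
      have := Nat.choose_succ_right_eq (p + 1 + d) p
      rw [show p + 1 + d - p = d + 1 by omega] at this
      exact_mod_cast this
    unfold lterm
    have e0 : p + 1 + d - p = d + 1 := by omega
    have e1 : p + 1 + d - (p + 1) = d := by omega
    rw [e0, e1, Nat.add_sub_cancel]
    set X : ℂ := A + B + K - ((p + 1 + d : ℕ) : ℂ) + 1 with hX
    have x1 : A + B + 0 + (K + 1) - ((p + 1 + d : ℕ) : ℂ) + 1 = X + 1 := by rw [hX]; ring
    have x2 : A + B + 0 + K - ((p + 1 + d : ℕ) : ℂ) + 1 = X := by rw [hX]; ring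
    have y1 : A + (K + 1) - ((p + 1 : ℕ) : ℂ) = A + K - p := by push_cast; ring
    have y2 : B + (K + 1) - ((p + 1 : ℕ) : ℂ) = B + K - p := by push_cast; ring
    have z1 : A + K - ((p + 1 : ℕ) : ℂ) = A + K - p - 1 := by push_cast; ring
    have z2 : B + K - ((p + 1 : ℕ) : ℂ) = B + K - p - 1 := by push_cast; ring
    rw [x1, x2, y1, y2, z1, z2, cfall_succ' (K + 1), cfall_succ' (X + 1), cfall_succ K,
      cfall_succ X, add_sub_cancel_right, add_sub_cancel_right]
    have hX' : X = A + B + K - (p + 1 + d) + 1 := by rw [hX]; push_cast; ring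
    clear_value X
    have hB : B = X - A - K + p + d := by rw [hX']; ring
    subst hB
    rcases d with _ | e
    · simp only [cfall_zero, Nat.choose_self, add_zero] at hc ⊢
      push_cast at hc ⊢
      generalize ((p + 1).choose p : ℂ) = c at *
      have : c = p + 1 := by linear_combination -hc
      subst this
      ring
    · rw [cfall_succ' (A + K - p), cfall_succ' (X - A - K + p + _ + K - p), cfall_succ (A + K - p - 1),
        cfall_succ (X - A - K + p + _ + K - p - 1), Nat.add_sub_cancel]
      push_cast at hc ⊢
      generalize cfall (A + K - p - 1) e = P at *
      generalize cfall (X - A - K + p + (e + 1) + K - p - 1) e = Q at *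
      generalize cfall K p = R at *
      generalize cfall X p = T at *
      generalize ((p + 1 + (e + 1)).choose p : ℂ) = c at *
      generalize ((p + 1 + (e + 1)).choose (p + 1) : ℂ) = c' at *
      have : c = c' * (p + 1) / (e + 2) := by
        have : (e + 2 : ℂ) ≠ 0 := by exact_mod_cast (by omega : e + 2 ≠ 0)
        field_simp
        linear_combination -hc
      have h2 : (e + 2 : ℂ) ≠ 0 := by exact_mod_cast (by omega : e + 2 ≠ 0)
      have hc2 : c * (e + 2) = c' * (p + 1) := by linear_combination -hc
      rw [pow_succ]
      generalize ((-1 : ℂ) ^ p) = w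
      linear_combination (w * (X + K + 1 - p) * R * T * (A + K - p) * (X - A + e + 1) * P * Q) * hc2

theorem saal (S : ℕ) (K : ℕ) (A B : ℂ) :
    ∑ m ∈ Finset.range (S + 1), lterm S K A B 0 m = cfall A S * cfall B S := by
  induction K with
  | zero =>
    rw [Finset.sum_range_succ', Finset.sum_eq_zero]
    · simp [lterm, cfall_zero]
    · intro i _
      simp [lterm, cfall_succ']
  | succ K ih =>
    have := wz S K A B S le_rfl
    rw [Finset.sum_sub_distrib, ih] at this
    simp only [Nat.sub_self, Nat.cast_zero, mul_zero, zero_mul] at this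
    push_cast
    linear_combination this

theorem lstep (S : ℕ) (K A B b : ℂ) :
    ∑ m ∈ Finset.range (S + 1 + 1), lterm (S + 1) K A B (b + 1) m =
    ∑ m ∈ Finset.range (S + 1 + 1), lterm (S + 1) K A B b m
      - (S + 1) * K * ∑ m ∈ Finset.range (S + 1), lterm S (K - 1) A B b m := by
  rw [eq_sub_iff_add_eq, ← eq_sub_iff_add_eq', ← Finset.sum_sub_distrib, Finset.mul_sum,
    Finset.sum_range_succ' _ (S + 1)]
  symm
  have h0 : lterm (S + 1) K A B b 0 - lterm (S + 1) K A B (b + 1) 0 = 0 := by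
    simp [lterm, cfall_zero]
  rw [h0, add_zero]
  apply Finset.sum_congr rfl
  intro i _
  unfold lterm
  have hc : ((S + 1 : ℕ) : ℂ) * (S.choose i : ℂ) = ((S + 1).choose (i + 1) : ℂ) * ((i + 1 : ℕ) : ℂ) := by
    exact_mod_cast Nat.add_one_mul_choose_eq S i
  rw [show S + 1 - (i + 1) = S - i by omega, cfall_succ' K]
  have e1 : A + K - ((i + 1 : ℕ) : ℂ) = A + (K - 1) - i := by push_cast; ring
  have e2 : B + K - ((i + 1 : ℕ) : ℂ) = B + (K - 1) - i := by push_cast; ring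
  have e3 : A + B + (b + 1) + K - ((S + 1 : ℕ) : ℂ) + 1 = (A + B + b + (K - 1) - S + 1) + 1 := by
    push_cast; ring
  have e4 : A + B + b + K - ((S + 1 : ℕ) : ℂ) + 1 = (A + B + b + (K - 1) - S + 1) := by
    push_cast; ring
  rw [e1, e2, e3, e4]
  generalize A + B + b + (K - 1) - S + 1 = Y
  rw [cfall_succ' (Y + 1), cfall_succ Y, add_sub_cancel_right, pow_succ]
  push_cast at hc
  linear_combination (-(-1) ^ i * K * cfall (K - 1) i * cfall Y i * cfall (A + (K - 1) - i) (S - i) *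
    cfall (B + (K - 1) - i) (S - i)) * hc

theorem rstep (S : ℕ) (K A B b : ℂ) :
    ∑ m ∈ Finset.range (S + 1 + 1), rterm (S + 1) K A B (b + 1) m =
    ∑ m ∈ Finset.range (S + 1 + 1), rterm (S + 1) K A B b m
      - (S + 1) * K * ∑ m ∈ Finset.range (S + 1), rterm S (K - 1) A B b m := by
  rw [eq_sub_iff_add_eq, ← eq_sub_iff_add_eq', ← Finset.sum_sub_distrib, Finset.mul_sum,
    Finset.sum_range_succ' _ (S + 1)]
  symm
  have h0 : rterm (S + 1) K A B b 0 - rterm (S + 1) K A B (b + 1) 0 = 0 := by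
    simp [rterm, cfall_zero]
  rw [h0, add_zero]
  apply Finset.sum_congr rfl
  intro i _
  unfold rterm
  have hc : ((S + 1 : ℕ) : ℂ) * (S.choose i : ℂ) = ((S + 1).choose (i + 1) : ℂ) * ((i + 1 : ℕ) : ℂ) := by
    exact_mod_cast Nat.add_one_mul_choose_eq S i
  rw [show S + 1 - (i + 1) = S - i by omega, cfall_succ' K]
  rw [cfall_succ' (b + 1), cfall_succ b, add_sub_cancel_right, pow_succ]
  push_cast at hc
  linear_combination (-(-1) ^ i * K * cfall (K - 1) i * cfall b i * cfall A (S - i) *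
    cfall B (S - i)) * hc

theorem key (b : ℕ) : ∀ (S K : ℕ) (A B : ℂ),
    ∑ m ∈ Finset.range (S + 1), lterm S K A B b m =
      ∑ m ∈ Finset.range (S + 1), rterm S K A B b m := by
  induction b with
  | zero =>
    intro S K A B
    rw [Nat.cast_zero, saal, Finset.sum_range_succ', Finset.sum_eq_zero]
    · simp [rterm, cfall_zero]
    · intro i _
      simp [rterm, cfall_succ']
  | succ b ih =>
    intro S K A B
    rcases S with _ | S
    · simp [lterm, rterm, cfall_zero]
    · push_cast
      rw [lstep, rstep, ih]
      rcases K with _ | K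
      · simp
      · have : ((K + 1 : ℕ) : ℂ) - 1 = (K : ℂ) := by push_cast; ring
        rw [this, ih]

theorem choose_ratio (b c s j : ℕ) (hj : j ≤ s) (hs : s ≤ b + c) :
    (ichoose (b + c - s) ((b : ℤ) - j) : ℂ) * cfall ((b + c : ℕ) : ℂ) s =
      ((b + c).choose b : ℂ) * cfall (b : ℂ) j * cfall (c : ℂ) (s - j) := by
  rw [cfall_nat, cfall_nat, cfall_nat]
  generalize hz : (b : ℤ) - j = z
  norm_cast
  unfold ichoose
  by_cases hb : j ≤ b
  · rw [if_pos (by omega), show z.toNat = b - j by omega]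
    by_cases hc : s - j ≤ c
    · obtain ⟨p, rfl⟩ := Nat.exists_eq_add_of_le hb
      obtain ⟨t, rfl⟩ := Nat.exists_eq_add_of_le hj
      rw [Nat.add_sub_cancel_left] at *
      obtain ⟨q, rfl⟩ := Nat.exists_eq_add_of_le hc
      have h1 := Nat.add_choose_mul_factorial_mul_factorial p q
      have h2 := Nat.add_choose_mul_factorial_mul_factorial (j + p) (t + q)
      have h3 := Nat.factorial_mul_descFactorial (n := j + p) (k := j) (by omega)
      have h4 := Nat.factorial_mul_descFactorial (n := t + q) (k := t) (by omega)
      have h5 := Nat.factorial_mul_descFactorial (n := j + p + (t + q)) (k := j + t) (by omega)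
      rw [Nat.add_sub_cancel_left] at h3 h4 ⊢
      rw [show j + p + (t + q) - (j + t) = p + q by omega] at h5 ⊢
      have hp : 0 < p.factorial * q.factorial := by positivity
      apply Nat.eq_of_mul_eq_mul_left hp
      rw [← h3, ← h4, ← h5, ← h1, ← Nat.choose_symm_add, ← Nat.choose_symm_add] at h2
      linarith
    · rw [Nat.choose_eq_zero_of_lt (by omega), Nat.descFactorial_of_lt (n := c) (by omega)]
      simp
  · rw [if_neg (by omega), Nat.descFactorial_of_lt (n := b) (by omega)]
    simp

/-- The classical expression of the Hahn kernel at an integer point `k` with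
`max(0, r2-r1) ≤ k ≤ min(r2, n-r1)`. -/
theorem stmt_15 (n r1 r2 s : ℕ) (h1 : r1 ≤ n) (h2 : r2 ≤ n)
    (hs : s ≤ min (min r1 (n - r1)) (min r2 (n - r2)))
    (k : ℕ) (hk1 : r2 ≤ r1 + k) (hk2 : k ≤ min r2 (n - r1)) :
    hahn n r1 r2 s (k : ℂ) =
      (cfall (r1 : ℂ) s / cfall (r2 : ℂ) s) *
        ∑ j ∈ Finset.range (s + 1),
          (-1 : ℂ) ^ j * (s.choose j : ℂ) *
            (ichoose (r1 - s) ((r1 : ℤ) - r2 + k - j) : ℂ) *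
            (ichoose (n - r1 - s) ((k : ℤ) - j) : ℂ) /
            ((ichoose r1 ((r1 : ℤ) - r2 + k) : ℂ) * (ichoose (n - r1) (k : ℤ) : ℂ)) := by
  obtain ⟨⟨hs1, hs2⟩, hs3, hs4⟩ : (s ≤ r1 ∧ s ≤ n - r1) ∧ s ≤ r2 ∧ s ≤ n - r2 := by
    simpa only [le_min_iff] using hs
  obtain ⟨hk2, hk3⟩ := le_min_iff.mp hk2
  obtain ⟨A, rfl⟩ := Nat.exists_eq_add_of_le hk2
  obtain ⟨b, hb⟩ : ∃ b, r1 = b + A := ⟨r1 - A, by omega⟩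
  obtain ⟨B, hB⟩ := Nat.exists_eq_add_of_le hk3
  obtain ⟨rfl⟩ : n = b + A + (k + B) := by omega
  subst hb
  have hM : b + A + (k + B) - (b + A) = k + B := by omega
  rw [hM] at hs2 ⊢
  have n1 : cfall ((b + A : ℕ) : ℂ) s ≠ 0 := by
    rw [cfall_nat]; exact_mod_cast (Nat.descFactorial_pos.mpr hs1).ne'
  have n2 : cfall ((k + A : ℕ) : ℂ) s ≠ 0 := by
    rw [cfall_nat]; exact_mod_cast (Nat.descFactorial_pos.mpr hs3).ne'
  have n3 : cfall ((k + B : ℕ) : ℂ) s ≠ 0 := by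
    rw [cfall_nat]; exact_mod_cast (Nat.descFactorial_pos.mpr hs2).ne'
  have hL : hahn (b + A + (k + B)) (b + A) (k + A) s (k : ℂ) =
      (∑ m ∈ Finset.range (s + 1), lterm s k A B b m) /
        (cfall ((k + A : ℕ) : ℂ) s * cfall ((k + B : ℕ) : ℂ) s) := by
    unfold hahn
    rw [Finset.sum_div]
    apply Finset.sum_congr rfl
    intro j hj
    have hj' : j ≤ s := by simpa [Nat.lt_succ_iff] using hj
    obtain ⟨t, rfl⟩ := Nat.exists_eq_add_of_le hj'
    have f1 := cfall_add ((k + A : ℕ) : ℂ) j t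
    have f2 := cfall_add ((k + B : ℕ) : ℂ) j t
    rw [f1] at n2
    rw [f2] at n3
    have hc : cfall ((j + t : ℕ) : ℂ) j = ((j + t).choose j : ℂ) * (j.factorial : ℂ) := by
      rw [cfall_nat, Nat.descFactorial_eq_factorial_mul_choose]; push_cast; ring
    have e1 : ((b + A + (k + B) : ℕ) : ℂ) - ((b + A : ℕ) : ℂ) = ((k + B : ℕ) : ℂ) := by
      push_cast; ring
    have e2 : ((b + A + (k + B) : ℕ) : ℂ) - ((j + t : ℕ) : ℂ) + 1 =
        (A : ℂ) + B + b + k - ((j + t : ℕ) : ℂ) + 1 := by push_cast; ring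
    have e3 : (A : ℂ) + k - j = ((k + A : ℕ) : ℂ) - j := by push_cast; ring
    have e4 : (B : ℂ) + k - j = ((k + B : ℕ) : ℂ) - j := by push_cast; ring
    unfold lterm cbinom
    rw [f1, f2, hc, e1, e2, e3, e4, Nat.add_sub_cancel_left]
    have g1 := left_ne_zero_of_mul n2
    have g2 := right_ne_zero_of_mul n2
    have g3 := left_ne_zero_of_mul n3
    have g4 := right_ne_zero_of_mul n3
    have g5 : (j.factorial : ℂ) ≠ 0 := by exact_mod_cast j.factorial_ne_zero
    generalize cfall ((k + A : ℕ) : ℂ) j = u1 at *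
    generalize cfall (((k + A : ℕ) : ℂ) - j) t = u2 at *
    generalize cfall ((k + B : ℕ) : ℂ) j = u3 at *
    generalize cfall (((k + B : ℕ) : ℂ) - j) t = u4 at *
    generalize cfall ((A : ℂ) + B + b + k - ((j + t : ℕ) : ℂ) + 1) j = u5 at *
    field_simp
  rw [hL, key, Finset.sum_div, Finset.mul_sum]
  apply Finset.sum_congr rfl
  intro j hj
  have hj' : j ≤ s := by simpa [Nat.lt_succ_iff] using hj
  have c1 := choose_ratio b A s j hj' hs1
  have c2 := choose_ratio k B s j hj' hs2
  have e1 : ((b + A : ℕ) : ℤ) - ((k + A : ℕ) : ℤ) + k = b := by push_cast; ring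
  have i1 : ichoose (b + A) (b : ℤ) = (b + A).choose b := by simp [ichoose]
  have i2 : ichoose (k + B) (k : ℤ) = (k + B).choose k := by simp [ichoose]
  rw [e1, i1, i2]
  have p1 : ((b + A).choose b : ℂ) ≠ 0 := by
    exact_mod_cast (Nat.choose_pos (by omega : b ≤ b + A)).ne'
  have p2 : ((k + B).choose k : ℂ) ≠ 0 := by
    exact_mod_cast (Nat.choose_pos (by omega : k ≤ k + B)).ne'
  have c1' := eq_div_of_mul_eq n1 c1
  have c2' := eq_div_of_mul_eq n3 c2
  rw [c1', c2']
  unfold rterm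
  generalize cfall ((b + A : ℕ) : ℂ) s = v1 at *
  generalize cfall ((k + A : ℕ) : ℂ) s = v2 at *
  generalize cfall ((k + B : ℕ) : ℂ) s = v3 at *
  field_simp
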